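/- Let σ be a saturation function, S its modified saturation function, and f the associated vector field on ℝ². Then f is differentiable everywhere with Df(0) = S'(0)·I₂ and, for z≠0, Df(z) = S'(‖z‖)·zzᵀ/‖z‖² + (S(‖z‖)/‖z‖)·(I₂ − zzᵀ/‖z‖²). Moreover, for every z∈ℝ², the matrix Df(z) is symmetric positive definite. -/

import Mathlib

open Real Filter MeasureTheory intervalIntegral RealInnerProductSpace

noncomputable section

/-- A saturation function: odd, globally Lipschitz, sign-definite, with finite positive limits
of `σ` at `+∞` and of `σ ξ / ξ` at `0`, non-decreasing, differentiable on `(0,∞)` with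
non-increasing derivative there. -/
def IsSaturation (σ : ℝ → ℝ) : Prop :=
  (∀ ξ, σ (-ξ) = -σ ξ) ∧
  (∃ L : NNReal, LipschitzWith L σ) ∧
  (∀ ξ : ℝ, ξ ≠ 0 → σ ξ * ξ > 0) ∧
  (∃ l > 0, Tendsto σ atTop (nhds l)) ∧
  (∃ l > 0, Tendsto (fun ξ => σ ξ / ξ) (nhdsWithin 0 {(0:ℝ)}ᶜ) (nhds l)) ∧
  Monotone σ ∧
  DifferentiableOn ℝ σ (Set.Ioi 0) ∧
  AntitoneOn (deriv σ) (Set.Ioi 0)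

/-- The modified saturation function `S` associated with `σ`:
`S ξ = (2/π) ∫_0^{π/2} sin v · σ(ξ sin v) dv`. -/
def modSat (σ : ℝ → ℝ) (ξ : ℝ) : ℝ :=
  (2 / Real.pi) * ∫ v in (0:ℝ)..(Real.pi / 2), Real.sin v * σ (ξ * Real.sin v)

abbrev E2 := EuclideanSpace ℝ (Fin 2)

open Classical in
/-- The radial vector field `f(z) = S(‖z‖) z / ‖z‖`, `f(0) = 0`. -/
def fvec (σ : ℝ → ℝ) (z : E2) : E2 :=
  if z = 0 then 0 else (modSat σ ‖z‖ / ‖z‖) • z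

/-! Differentiating under the integral sign gives `S'(r) = (2/π) ∫ sin² v · σ'(r sin v) dv` for
`r ≥ 0`; at `r = 0` this is `σ'(0) / 2`. If it vanished for some `r > 0`, then `σ'(r sin v) = 0`
for almost every `v`, since `σ' ≥ 0`; hence `σ r - σ 0 = ∫ r cos v · σ'(r sin v) dv = 0`, although
`σ'(0) > 0` and `σ` is monotone. So `S' > 0` on `[0, ∞)` and, as `S 0 = 0`, also `S > 0` on
`(0, ∞)`.

A radial field `z ↦ g(‖z‖) z / ‖z‖` is differentiated by the product rule: its derivative at `z`
scales the line `ℝ z` by `g'(‖z‖)` and its orthogonal complement by `g(‖z‖) / ‖z‖`, both positive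
for `g = S`. At the origin both factors become `g'(0)`.
-/

section ScaleAlong

variable {E : Type*} [NormedAddCommGroup E] [InnerProductSpace ℝ E]
  (K : Submodule ℝ E) [K.HasOrthogonalProjection] {a b : ℝ}

/-- The operator acting as the scalar `a` on the subspace `K` and as the scalar `b` on its
orthogonal complement; the derivative of a radial field has this form, with `K` a line. -/
def scaleAlong (a b : ℝ) : E →L[ℝ] E :=
  a • K.starProjection + b • Kᗮ.starProjection

lemma scaleAlong_self (a : ℝ) : scaleAlong K a a = a • ContinuousLinearMap.id ℝ E := by
  rw [scaleAlong, ← smul_add, ← K.id_eq_sum_starProjection_self_orthogonalComplement]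

lemma scaleAlong_span_singleton_apply (a b : ℝ) (z v : E) :
    scaleAlong (ℝ ∙ z) a b v =
      a • ((⟪z, v⟫ / ‖z‖ ^ 2) • z) + b • (v - (⟪z, v⟫ / ‖z‖ ^ 2) • z) := by
  simp [scaleAlong, Submodule.starProjection_orthogonal', Submodule.starProjection_singleton]

lemma inner_scaleAlong_left_eq_right (a b : ℝ) (v w : E) :
    ⟪scaleAlong K a b v, w⟫ = ⟪v, scaleAlong K a b w⟫ := by
  simp only [scaleAlong, add_apply, smul_apply, inner_add_left, inner_add_right,
    real_inner_smul_left, real_inner_smul_right, Submodule.inner_starProjection_left_eq_right]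

lemma inner_scaleAlong_self (a b : ℝ) (v : E) :
    ⟪v, scaleAlong K a b v⟫ =
      a * ‖K.starProjection v‖ ^ 2 + b * ‖Kᗮ.starProjection v‖ ^ 2 := by
  have inner_self_proj (U : Submodule ℝ E) [U.HasOrthogonalProjection] :
      ⟪v, U.starProjection v⟫ = ‖U.starProjection v‖ ^ 2 := by
    rw [real_inner_comm]
    exact U.re_inner_starProjection_eq_normSq v
  simp only [scaleAlong, add_apply, smul_apply, inner_add_right, real_inner_smul_right,
    inner_self_proj]

lemma inner_scaleAlong_self_pos (ha : 0 < a) (hb : 0 < b) {v : E} (hv : v ≠ 0) :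
    0 < ⟪v, scaleAlong K a b v⟫ := by
  calc 0 < min a b * ‖v‖ ^ 2 := mul_pos (lt_min ha hb) (by positivity)
    _ = min a b * ‖K.starProjection v‖ ^ 2 + min a b * ‖Kᗮ.starProjection v‖ ^ 2 := by
      rw [Submodule.norm_sq_eq_add_norm_sq_starProjection v K, mul_add]
    _ ≤ a * ‖K.starProjection v‖ ^ 2 + b * ‖Kᗮ.starProjection v‖ ^ 2 := by
      gcongr
      exacts [min_le_left a b, min_le_right a b]
    _ = ⟪v, scaleAlong K a b v⟫ := (inner_scaleAlong_self K a b v).symm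

end ScaleAlong

/-- The radial vector field with profile `g`, which generalizes `fvec` to any profile and dimension.
It vanishes at the origin whatever the junk value of `g 0 / 0`, as that scalar multiplies `0`. -/
def radialField {E : Type*} [NormedAddCommGroup E] [NormedSpace ℝ E] (g : ℝ → ℝ) (z : E) : E :=
  (g ‖z‖ / ‖z‖) • z

lemma fvec_eq_radialField (σ : ℝ → ℝ) : fvec σ = radialField (modSat σ) := by
  funext z
  by_cases hz : z = 0 <;> simp [fvec, radialField, hz]

lemma hasFDerivAt_radialField_zero {E : Type*} [NormedAddCommGroup E] [NormedSpace ℝ E]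
    {g : ℝ → ℝ} {c : ℝ} (hg : HasDerivWithinAt g c (Set.Ici 0) 0) (hg₀ : g 0 = 0) :
    HasFDerivAt (radialField g) (c • ContinuousLinearMap.id ℝ E) 0 := by
  have norm_tendsto : Tendsto (fun z : E => ‖z‖) (nhds 0) (nhdsWithin 0 (Set.Ici 0)) :=
    tendsto_nhdsWithin_iff.2 ⟨tendsto_norm_zero, .of_forall norm_nonneg⟩
  have norm_remainder (z : E) :
      ‖g ‖z‖ - c * ‖z‖‖ = ‖radialField g z - c • z‖ := by
    rcases eq_or_ne z 0 with rfl | hz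
    · simp [radialField, hg₀]
    · have hn : ‖z‖ ≠ 0 := norm_ne_zero_iff.2 hz
      calc ‖g ‖z‖ - c * ‖z‖‖ = ‖(g ‖z‖ / ‖z‖ - c) * ‖z‖‖ := by
            rw [sub_mul, div_mul_cancel₀ _ hn]
        _ = ‖radialField g z - c • z‖ := by
            rw [norm_mul, norm_norm, ← norm_smul, sub_smul, radialField]
  have remainder_isLittleO := (hasDerivWithinAt_iff_isLittleO.1 hg).comp_tendsto norm_tendsto
  rw [hasFDerivAt_iff_isLittleO_nhds_zero, ← Asymptotics.isLittleO_norm_norm]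
  refine (Asymptotics.isLittleO_norm_norm.2 remainder_isLittleO).congr (fun z => ?_) fun z => ?_
  · simpa [hg₀, radialField, mul_comm] using norm_remainder z
  · simp

section RadialField

variable {E : Type*} [NormedAddCommGroup E] [InnerProductSpace ℝ E] {g : ℝ → ℝ}

lemma hasFDerivAt_norm {z : E} (hz : z ≠ 0) :
    HasFDerivAt (fun x : E => ‖x‖) (‖z‖⁻¹ • innerSL ℝ z) z := by
  have hsqrt := (hasStrictFDerivAt_norm_sq z).hasFDerivAt.sqrt (by positivity)
  simp only [Real.sqrt_sq (norm_nonneg _)] at hsqrt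
  convert hsqrt using 1
  match_scalars
  field

lemma hasFDerivAt_radialField {z : E} (hz : z ≠ 0) {c : ℝ} (hg : HasDerivAt g c ‖z‖) :
    HasFDerivAt (radialField g) (scaleAlong (ℝ ∙ z) c (g ‖z‖ / ‖z‖)) z := by
  have hn : ‖z‖ ≠ 0 := norm_ne_zero_iff.2 hz
  have hquot := (hg.div (hasDerivAt_id ‖z‖) hn).comp_hasFDerivAt z (hasFDerivAt_norm hz)
  refine (hquot.smul (hasFDerivAt_id z)).congr_fderiv ?_
  ext1 v
  rw [scaleAlong_span_singleton_apply]
  simp only [Function.comp_apply, Pi.div_apply, id_eq, mul_one, add_apply, smul_apply,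
    ContinuousLinearMap.id_apply, ContinuousLinearMap.smulRight_apply, coe_innerSL_apply,
    smul_eq_mul]
  match_scalars <;> field

lemma exists_hasFDerivAt_radialField (hg₀ : g 0 = 0) (hg' : ∀ r, 0 ≤ r → 0 < deriv g r) (z : E) :
    ∃ b > 0, HasFDerivAt (radialField g) (scaleAlong (ℝ ∙ z) (deriv g ‖z‖) b) z := by
  have hg : ∀ r, 0 ≤ r → DifferentiableAt ℝ g r := fun r hr =>
    differentiableAt_of_deriv_ne_zero (hg' r hr).ne'
  rcases eq_or_ne z 0 with rfl | hz
  · refine ⟨deriv g 0, hg' 0 le_rfl, ?_⟩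
    rw [norm_zero, scaleAlong_self]
    exact hasFDerivAt_radialField_zero (hg 0 le_rfl).hasDerivAt.hasDerivWithinAt hg₀
  · have hn : 0 < ‖z‖ := norm_pos_iff.2 hz
    have hmono : StrictMonoOn g (Set.Ici 0) := by
      refine strictMonoOn_of_deriv_pos (convex_Ici 0)
        (fun r hr => (hg r hr).continuousAt.continuousWithinAt) fun r hr => hg' r ?_
      exact interior_subset hr
    have hpos : 0 < g ‖z‖ := hg₀ ▸ hmono Set.self_mem_Ici hn.le hn
    exact ⟨g ‖z‖ / ‖z‖, div_pos hpos hn, hasFDerivAt_radialField hz (hg _ hn.le).hasDerivAt⟩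

end RadialField

section RealFunction

variable {f : ℝ → ℝ}

lemma lt_of_monotoneOn_of_deriv_pos {a b : ℝ} (hab : a < b) (hmono : MonotoneOn f (Set.Icc a b))
    (ha : 0 < deriv f a) : f a < f b := by
  have slope_pos : ∀ᶠ x in nhdsWithin a (Set.Ioi a), 0 < slope f a x :=
    ((differentiableAt_of_deriv_ne_zero ha.ne').hasDerivAt.tendsto_slope.eventually
      (lt_mem_nhds ha)).filter_mono (nhdsWithin_mono a fun _ hx => ne_of_gt hx)
  obtain ⟨x, hx, hxab⟩ := (slope_pos.and (Ioc_mem_nhdsGT hab)).exists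
  have hax : f a < f x := by
    rw [slope_def_field] at hx
    exact sub_pos.1 ((div_pos_iff_of_pos_right (sub_pos.2 hxab.1)).1 hx)
  exact hax.trans_le (hmono ⟨hxab.1.le, hxab.2⟩ ⟨hab.le, le_rfl⟩ hxab.2)

lemma deriv_nonneg_of_monotoneOn {s : Set ℝ} {x : ℝ} (hmono : MonotoneOn f s)
    (hs : s ∈ nhds x) : 0 ≤ deriv f x := by
  rw [← derivWithin_of_mem_nhds hs]
  exact hmono.derivWithin_nonneg

lemma lipschitzOnWith_const_mul_comp_mul_const {a R : ℝ} (ha : |a| ≤ 1) {L : NNReal}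
    (hf : LipschitzOnWith L f (Metric.closedBall 0 R)) :
    LipschitzOnWith L (fun x => a * f (x * a)) (Metric.closedBall 0 R) := by
  have maps_ball : ∀ x ∈ Metric.closedBall 0 R, x * a ∈ Metric.closedBall 0 R := by
    intro x hx
    rw [mem_closedBall_zero_iff] at hx ⊢
    exact (norm_mul_le x a).trans ((mul_le_of_le_one_right (norm_nonneg x) ha).trans hx)
  refine LipschitzOnWith.of_dist_le_mul fun x hx y hy => ?_
  simp only [dist_eq_norm, ← mul_sub, norm_mul]
  calc ‖a‖ * ‖f (x * a) - f (y * a)‖ ≤ 1 * ‖f (x * a) - f (y * a)‖ := by gcongr; exact ha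
    _ ≤ L * ‖x * a - y * a‖ := by
      rw [one_mul]
      exact hf.norm_sub_le (maps_ball x hx) (maps_ball y hy)
    _ = L * (‖x - y‖ * ‖a‖) := by rw [← sub_mul, norm_mul]
    _ ≤ L * ‖x - y‖ := by
      gcongr
      exact mul_le_of_le_one_right (norm_nonneg _) ha

end RealFunction

section ModSat

variable {σ : ℝ → ℝ} {r : ℝ}

lemma modSat_zero (h₀ : σ 0 = 0) : modSat σ 0 = 0 := by
  simp [modSat, h₀]

lemma mul_sin_mem_uIcc (r : ℝ) {v : ℝ} (hv : v ∈ Set.Icc 0 (π / 2)) :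
    r * sin v ∈ Set.uIcc 0 r := by
  have hsin : sin v ∈ Set.Icc 0 1 :=
    ⟨sin_nonneg_of_nonneg_of_le_pi hv.1 (by linarith [hv.2, pi_pos]), sin_le_one v⟩
  rw [mul_comm]
  exact (convex_uIcc 0 r).smul_mem_of_zero_mem Set.left_mem_uIcc Set.right_mem_uIcc hsin

lemma hasDerivAt_modSat (hσ : LocallyLipschitz σ)
    (hd : ∀ x ∈ Set.uIcc 0 r, DifferentiableAt ℝ σ x) :
    IntervalIntegrable (fun v => sin v ^ 2 * deriv σ (r * sin v)) volume 0 (π / 2) ∧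
    HasDerivAt (modSat σ)
      (2 / π * ∫ v in (0 : ℝ)..(π / 2), sin v ^ 2 * deriv σ (r * sin v)) r := by
  obtain ⟨L, hL⟩ :=
    (hσ.locallyLipschitzOn (s := Metric.closedBall 0 (|r| + 1))).exists_lipschitzOnWith_of_compact
      (isCompact_closedBall _ _)
  have ball_mem : Metric.closedBall 0 (|r| + 1) ∈ nhds r :=
    Metric.closedBall_mem_nhds_of_mem (by simp)
  have hcont : Continuous σ := hσ.continuous
  have integrand_continuous (x : ℝ) : Continuous fun v => sin v * σ (x * sin v) := by fun_prop
  have deriv_integrand : ∀ v ∈ Set.uIoc 0 (π / 2),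
      HasDerivAt (fun x => sin v * σ (x * sin v)) (sin v ^ 2 * deriv σ (r * sin v)) r := by
    intro v hv
    rw [Set.uIoc_of_le (by positivity)] at hv
    have hσ' := (hd _ (mul_sin_mem_uIcc r ⟨hv.1.le, hv.2⟩)).hasDerivAt
    rw [sq, mul_assoc, mul_comm (sin v) (deriv σ _)]
    exact (hσ'.comp r (hasDerivAt_mul_const (sin v))).const_mul (sin v)
  have leibniz := hasDerivAt_integral_of_dominated_loc_of_lip (μ := volume)
    (bound := fun _ => (L : ℝ)) ball_mem
    (.of_forall fun x => (integrand_continuous x).aestronglyMeasurable)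
    ((integrand_continuous r).intervalIntegrable _ _)
    (by fun_prop : Measurable fun v => sin v ^ 2 * deriv σ (r * sin v)).aestronglyMeasurable
    (.of_forall fun v _ => by
      simpa using lipschitzOnWith_const_mul_comp_mul_const (abs_sin_le_one v) hL)
    intervalIntegrable_const (.of_forall deriv_integrand)
  exact ⟨leibniz.1, leibniz.2.const_mul _⟩

lemma integral_deriv_comp_mul_sin (hr : 0 ≤ r)
    (hd : ∀ x ∈ Set.Icc 0 r, DifferentiableAt ℝ σ x) (hd' : ∀ x ∈ Set.Icc 0 r, 0 ≤ deriv σ x) :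
    IntervalIntegrable (fun v => deriv σ (r * sin v) * (r * cos v)) volume 0 (π / 2) ∧
    ∫ v in (0 : ℝ)..(π / 2), deriv σ (r * sin v) * (r * cos v) = σ r - σ 0 := by
  have hπ : 0 ≤ π / 2 := by positivity
  have mul_sin_mem : ∀ v ∈ Set.Icc 0 (π / 2), r * sin v ∈ Set.Icc 0 r := fun v hv =>
    Set.uIcc_of_le hr ▸ mul_sin_mem_uIcc r hv
  have hderiv : ∀ v ∈ Set.uIcc 0 (π / 2),
      HasDerivAt (fun v => σ (r * sin v)) (deriv σ (r * sin v) * (r * cos v)) v := by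
    intro v hv
    rw [Set.uIcc_of_le hπ] at hv
    exact (hd _ (mul_sin_mem v hv)).hasDerivAt.comp v ((hasDerivAt_sin v).const_mul r)
  have hint : IntervalIntegrable (fun v => deriv σ (r * sin v) * (r * cos v))
      volume 0 (π / 2) := by
    refine intervalIntegrable_deriv_of_nonneg (HasDerivAt.continuousOn hderiv)
      (fun v hv => hderiv v (Set.Ioo_subset_Icc_self hv)) fun v hv => ?_
    rw [min_eq_left hπ, max_eq_right hπ] at hv
    have hcos : 0 ≤ cos v := cos_nonneg_of_mem_Icc ⟨by linarith [hv.1], hv.2.le⟩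
    exact mul_nonneg (hd' _ (mul_sin_mem v (Set.Ioo_subset_Icc_self hv))) (mul_nonneg hr hcos)
  exact ⟨hint, by simpa using integral_eq_sub_of_hasDerivAt hderiv hint⟩

lemma integral_sin_sq_mul_deriv_pos_of_lt (hr : 0 ≤ r) (hlt : σ 0 < σ r)
    (hd : ∀ x ∈ Set.Icc 0 r, DifferentiableAt ℝ σ x) (hd' : ∀ x ∈ Set.Icc 0 r, 0 ≤ deriv σ x)
    (hint : IntervalIntegrable (fun v => sin v ^ 2 * deriv σ (r * sin v)) volume 0 (π / 2)) :
    0 < ∫ v in (0 : ℝ)..(π / 2), sin v ^ 2 * deriv σ (r * sin v) := by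
  have hπ : 0 < π / 2 := by positivity
  have deriv_nonneg : ∀ v ∈ Set.Ioc 0 (π / 2), 0 ≤ deriv σ (r * sin v) := fun v hv =>
    hd' _ (Set.uIcc_of_le hr ▸ mul_sin_mem_uIcc r (Set.Ioc_subset_Icc_self hv))
  obtain ⟨hint_cos, integral_cos⟩ := integral_deriv_comp_mul_sin hr hd hd'
  have integral_cos_pos : 0 < ∫ v in (0 : ℝ)..(π / 2), deriv σ (r * sin v) * (r * cos v) :=
    integral_cos ▸ sub_pos.2 hlt
  have integrand_cos_nonneg : 0 ≤ᵐ[volume.restrict (Set.uIoc 0 (π / 2))]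
      fun v => deriv σ (r * sin v) * (r * cos v) := by
    rw [Set.uIoc_of_le hπ.le]
    refine ae_restrict_of_forall_mem measurableSet_Ioc fun v hv => ?_
    have hcos : 0 ≤ cos v := cos_nonneg_of_mem_Icc ⟨by linarith [hv.1], hv.2⟩
    exact mul_nonneg (deriv_nonneg v hv) (mul_nonneg hr hcos)
  have integrand_sin_nonneg : 0 ≤ᵐ[volume.restrict (Set.uIoc 0 (π / 2))]
      fun v => sin v ^ 2 * deriv σ (r * sin v) := by
    rw [Set.uIoc_of_le hπ.le]
    exact ae_restrict_of_forall_mem measurableSet_Ioc fun v hv =>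
      mul_nonneg (sq_nonneg _) (deriv_nonneg v hv)
  have support_subset :
      Function.support (fun v => deriv σ (r * sin v) * (r * cos v)) ∩ Set.Ioc 0 (π / 2) ⊆
        Function.support (fun v => sin v ^ 2 * deriv σ (r * sin v)) ∩ Set.Ioc 0 (π / 2) := by
    rintro v ⟨hv, hv_mem⟩
    have hsin : 0 < sin v := sin_pos_of_pos_of_lt_pi hv_mem.1 (by linarith [hv_mem.2])
    exact ⟨mul_ne_zero (pow_ne_zero 2 hsin.ne') (left_ne_zero_of_mul hv), hv_mem⟩
  have support_cos_pos := ((integral_pos_iff_support_of_nonneg_ae' integrand_cos_nonneg hint_cos).1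
    integral_cos_pos).2
  exact (integral_pos_iff_support_of_nonneg_ae' integrand_sin_nonneg hint).2
    ⟨hπ, support_cos_pos.trans_le (measure_mono support_subset)⟩

lemma integral_sin_sq_mul_deriv_zero :
    ∫ v in (0 : ℝ)..(π / 2), sin v ^ 2 * deriv σ (0 * sin v) = π / 4 * deriv σ 0 := by
  simp only [zero_mul, intervalIntegral.integral_mul_const, integral_sin_sq, sin_zero,
    cos_pi_div_two, mul_zero, sub_zero, zero_add]
  ring

lemma deriv_modSat_pos (hσ : LocallyLipschitz σ) (hσ_diff : DifferentiableOn ℝ σ (Set.Ioi 0))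
    (hmono : MonotoneOn σ (Set.Ici 0)) (h₀ : 0 < deriv σ 0) (hr : 0 ≤ r) :
    0 < deriv (modSat σ) r := by
  have hd : ∀ x, 0 ≤ x → DifferentiableAt ℝ σ x := by
    intro x hx
    rcases hx.eq_or_lt with rfl | hx_pos
    · exact differentiableAt_of_deriv_ne_zero h₀.ne'
    · exact hσ_diff.differentiableAt (Ioi_mem_nhds hx_pos)
  obtain ⟨hint, hderiv⟩ := hasDerivAt_modSat (r := r) hσ fun x hx =>
    hd x (Set.uIcc_of_le hr ▸ hx).1
  rw [hderiv.deriv]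
  refine mul_pos (by positivity) ?_
  rcases hr.eq_or_lt with rfl | hr_pos
  · rw [integral_sin_sq_mul_deriv_zero]
    positivity
  · have hlt : σ 0 < σ r :=
      lt_of_monotoneOn_of_deriv_pos hr_pos (hmono.mono Set.Icc_subset_Ici_self) h₀
    refine integral_sin_sq_mul_deriv_pos_of_lt hr hlt (fun x hx => hd x hx.1) (fun x hx => ?_) hint
    rcases hx.1.eq_or_lt with rfl | hx_pos
    · exact h₀.le
    · exact deriv_nonneg_of_monotoneOn hmono (Ici_mem_nhds hx_pos)

end ModSat

namespace IsSaturation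

variable {σ : ℝ → ℝ}

lemma locallyLipschitz (hσ : IsSaturation σ) : LocallyLipschitz σ :=
  hσ.2.1.elim fun _ hL => hL.locallyLipschitz

lemma map_zero (hσ : IsSaturation σ) : σ 0 = 0 := by
  simpa [self_eq_neg] using hσ.1 0

lemma monotone (hσ : IsSaturation σ) : Monotone σ := hσ.2.2.2.2.2.1

lemma deriv_zero_pos (hσ : IsSaturation σ) : 0 < deriv σ 0 := by
  obtain ⟨l, hl, hlim⟩ := hσ.2.2.2.2.1
  have hderiv : HasDerivAt σ l 0 := by
    rw [hasDerivAt_iff_tendsto_slope]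
    simpa [slope_fun_def_field, hσ.map_zero] using hlim
  rwa [hderiv.deriv]

lemma differentiableOn (hσ : IsSaturation σ) : DifferentiableOn ℝ σ (Set.Ioi 0) :=
  hσ.2.2.2.2.2.2.1

end IsSaturation

theorem stmt7_general {E : Type*} [NormedAddCommGroup E] [InnerProductSpace ℝ E] {σ : ℝ → ℝ}
    (hLip : LocallyLipschitz σ) (hd : DifferentiableOn ℝ σ (Set.Ioi 0))
    (hmono : MonotoneOn σ (Set.Ici 0)) (h₀ : σ 0 = 0) (h₀' : 0 < deriv σ 0) :
    (∀ z : E, DifferentiableAt ℝ (radialField (modSat σ)) z) ∧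
    fderiv ℝ (radialField (modSat σ)) (0 : E) =
      deriv (modSat σ) 0 • ContinuousLinearMap.id ℝ E ∧
    (∀ z : E, z ≠ 0 → ∀ v : E,
      fderiv ℝ (radialField (modSat σ)) z v =
        deriv (modSat σ) ‖z‖ • ((⟪z, v⟫ / ‖z‖ ^ 2) • z) +
        (modSat σ ‖z‖ / ‖z‖) • (v - (⟪z, v⟫ / ‖z‖ ^ 2) • z)) ∧
    (∀ z v w : E, ⟪fderiv ℝ (radialField (modSat σ)) z v, w⟫ =
      ⟪v, fderiv ℝ (radialField (modSat σ)) z w⟫) ∧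
    (∀ z v : E, v ≠ 0 → 0 < ⟪v, fderiv ℝ (radialField (modSat σ)) z v⟫) := by
  have hS₀ : modSat σ 0 = 0 := modSat_zero h₀
  have hS' : ∀ r, 0 ≤ r → 0 < deriv (modSat σ) r := fun r =>
    deriv_modSat_pos hLip hd hmono h₀'
  have hS : ∀ r, 0 ≤ r → DifferentiableAt ℝ (modSat σ) r := fun r hr =>
    differentiableAt_of_deriv_ne_zero (hS' r hr).ne'
  have hfderiv := exists_hasFDerivAt_radialField (E := E) hS₀ hS'
  refine ⟨fun z => ?_, ?_, fun z hz v => ?_, fun z v w => ?_, fun z v hv => ?_⟩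
  · obtain ⟨b, -, hf⟩ := hfderiv z
    exact hf.differentiableAt
  · exact (hasFDerivAt_radialField_zero (hS 0 le_rfl).hasDerivAt.hasDerivWithinAt hS₀).fderiv
  · rw [(hasFDerivAt_radialField hz (hS _ (norm_nonneg z)).hasDerivAt).fderiv,
      scaleAlong_span_singleton_apply]
  · obtain ⟨b, -, hf⟩ := hfderiv z
    rw [hf.fderiv, inner_scaleAlong_left_eq_right]
  · obtain ⟨b, hb, hf⟩ := hfderiv z
    rw [hf.fderiv]
    exact inner_scaleAlong_self_pos _ (hS' _ (norm_nonneg z)) hb hv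

/-- `f` is differentiable everywhere, `Df(0) = S'(0) I`, for `z ≠ 0`
`Df(z) v = S'(‖z‖) (zzᵀ/‖z‖²) v + (S(‖z‖)/‖z‖)(I - zzᵀ/‖z‖²) v`, and `Df(z)` is
symmetric positive definite for every `z`. -/
theorem stmt7 (σ : ℝ → ℝ) (hσ : IsSaturation σ) :
    (∀ z : E2, DifferentiableAt ℝ (fvec σ) z) ∧
    fderiv ℝ (fvec σ) 0 = deriv (modSat σ) 0 • ContinuousLinearMap.id ℝ E2 ∧
    (∀ z : E2, z ≠ 0 → ∀ v : E2,
      fderiv ℝ (fvec σ) z v =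
        deriv (modSat σ) ‖z‖ • ((⟪z, v⟫ / ‖z‖ ^ 2) • z) +
        (modSat σ ‖z‖ / ‖z‖) • (v - (⟪z, v⟫ / ‖z‖ ^ 2) • z)) ∧
    (∀ z v w : E2, ⟪fderiv ℝ (fvec σ) z v, w⟫ = ⟪v, fderiv ℝ (fvec σ) z w⟫) ∧
    (∀ z v : E2, v ≠ 0 → 0 < ⟪v, fderiv ℝ (fvec σ) z v⟫) := by
  rw [fvec_eq_radialField]
  exact stmt7_general hσ.locallyLipschitz hσ.differentiableOn
    (hσ.monotone.monotoneOn _) hσ.map_zero hσ.deriv_zero_pos
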